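/- arXiv:1103.1310 — 7 statements merged into one kernel-verified Lean document; each statement's English description precedes it below -/
import Mathlib

section
/- Let V be a real inner product space, let n ≥ 2, let x_1, …, x_n be linearly independent vectors in V, and let p be a real number with -1/(n-1) < p < 1. Then there exist vectors z_1, …, z_n in V such that span{z_1, …, z_i} = span{x_1, …, x_i} for every 1 ≤ i ≤ n, ‖z_i‖ = 1 for all 1 ≤ i ≤ n, and ⟪z_i, z_j⟫ = p for all 1 ≤ i, j ≤ n with i ≠ j. -/
open scoped RealInnerProductSpace

/-!
Gram–Schmidt turns two linearly independent families into orthonormal ones spanning the same flags,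
and a linear isometry matching the orthonormal families matches the flags. Applied to `x` and to the
columns of a square root of a positive definite matrix `G`, this gives a family with Gram matrix `G`
generating the same flag as `x`. The matrix with `1` on the diagonal and `p` elsewhere is positive
definite because its quadratic form `(1 - p) ∑ ‖c i‖² + p ‖∑ c i‖²` is affine in
`‖∑ c i‖² ∈ [0, n ∑ ‖c i‖²]` and positive at both endpoints.
-/

section

open InnerProductSpace Matrix Set
open scoped ComplexOrder MatrixOrder

variable {𝕜 ι : Type*} [RCLike 𝕜]

section Flag

variable {V W : Type*} [NormedAddCommGroup V] [InnerProductSpace 𝕜 V]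
  [NormedAddCommGroup W] [InnerProductSpace 𝕜 W]

lemma exists_linearIsometry_comp_eq_of_orthonormal {e : ι → V} {f : ι → W}
    (he : Orthonormal 𝕜 e) (hf : Orthonormal 𝕜 f) (hspan : Submodule.span 𝕜 (range f) = ⊤) :
    ∃ T : W →ₗᵢ[𝕜] V, T ∘ f = e := by
  let b : Module.Basis ι 𝕜 W := .mk hf.linearIndependent hspan.ge
  have hb : b = f := Module.Basis.coe_mk _ _
  have hT : b.constr 𝕜 e ∘ b = e := funext (b.constr_basis 𝕜 e)
  refine ⟨(b.constr 𝕜 e).isometryOfOrthonormal (v := b) (by rwa [hb]) (by rwa [hT]), ?_⟩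
  rw [LinearMap.coe_isometryOfOrthonormal, ← hb, hT]

variable [LinearOrder ι] [LocallyFiniteOrderBot ι] [WellFoundedLT ι]

lemma span_gramSchmidtNormed_Iic (x : ι → V) (i : ι) :
    Submodule.span 𝕜 (gramSchmidtNormed 𝕜 x '' Iic i) = Submodule.span 𝕜 (x '' Iic i) := by
  rw [span_gramSchmidtNormed, span_gramSchmidt_Iic]

lemma exists_linearIsometry_map_span_image_Iic_eq
    {x : ι → V} (hx : LinearIndependent 𝕜 x) (b : Module.Basis ι 𝕜 W) :
    ∃ T : W →ₗᵢ[𝕜] V, ∀ i,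
      (Submodule.span 𝕜 (b '' Iic i)).map T.toLinearMap = Submodule.span 𝕜 (x '' Iic i) := by
  have hspan : Submodule.span 𝕜 (range (gramSchmidtNormed 𝕜 b)) = ⊤ := by
    rw [span_gramSchmidtNormed_range, span_gramSchmidt, b.span_eq]
  obtain ⟨T, hT⟩ := exists_linearIsometry_comp_eq_of_orthonormal
    (gramSchmidtNormed_orthonormal hx) (gramSchmidtNormed_orthonormal b.linearIndependent) hspan
  refine ⟨T, fun i ↦ ?_⟩
  calc (Submodule.span 𝕜 (b '' Iic i)).map T.toLinearMap
      = Submodule.span 𝕜 (T '' (gramSchmidtNormed 𝕜 b '' Iic i)) := by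
        rw [← span_gramSchmidtNormed_Iic b, Submodule.map_span, LinearIsometry.coe_toLinearMap]
    _ = Submodule.span 𝕜 (x '' Iic i) := by
        rw [← image_comp, hT, span_gramSchmidtNormed_Iic]

end Flag

section Gram

variable {G : Matrix ι ι 𝕜}

lemma exists_gram_eq_of_posSemidef [Fintype ι] (hG : G.PosSemidef) :
    ∃ y : ι → EuclideanSpace 𝕜 ι, gram 𝕜 y = G := by
  classical
  obtain ⟨B, rfl⟩ := CStarAlgebra.nonneg_iff_eq_star_mul_self.mp hG.nonneg
  refine ⟨fun j ↦ WithLp.toLp 2 (B.col j), ?_⟩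
  ext i j
  simp [star_eq_conjTranspose, mul_apply, PiLp.inner_apply, mul_comm]

lemma exists_basis_gram_eq_of_posDef [Fintype ι] (hG : G.PosDef) :
    ∃ b : Module.Basis ι 𝕜 (EuclideanSpace 𝕜 ι), gram 𝕜 b = G := by
  obtain ⟨y, rfl⟩ := exists_gram_eq_of_posSemidef hG.posSemidef
  let b := basisOfLinearIndependentOfCardEqFinrank' y (linearIndependent_of_posDef_gram hG)
    finrank_euclideanSpace.symm
  exact ⟨b, by simp [b]⟩

theorem exists_span_image_Iic_eq_and_gram_eq_of_posDef [Finite ι] [LinearOrder ι]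
    {V : Type*} [NormedAddCommGroup V] [InnerProductSpace 𝕜 V]
    {x : ι → V} (hx : LinearIndependent 𝕜 x) (hG : G.PosDef) :
    ∃ z : ι → V, (∀ i, Submodule.span 𝕜 (z '' Iic i) = Submodule.span 𝕜 (x '' Iic i)) ∧
      gram 𝕜 z = G := by
  have := Fintype.ofFinite ι
  let : LocallyFiniteOrderBot ι := .ofIic ι (fun i ↦ {j | j ≤ i}) (by simp)
  obtain ⟨b, hb⟩ := exists_basis_gram_eq_of_posDef hG
  obtain ⟨T, hT⟩ := exists_linearIsometry_map_span_image_Iic_eq hx b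
  refine ⟨T ∘ b, fun i ↦ ?_, ?_⟩
  · rw [← hT, Submodule.map_span, LinearIsometry.coe_toLinearMap, image_comp]
  · rw [← hb]
    ext i j
    exact T.inner_map_map (b i) (b j)

end Gram

section Equicorrelation

lemma norm_sum_sq_le_card_mul_sum_norm_sq {E : Type*} [SeminormedAddCommGroup E]
    (s : Finset ι) (c : ι → E) :
    ‖∑ i ∈ s, c i‖ ^ 2 ≤ s.card * ∑ i ∈ s, ‖c i‖ ^ 2 :=
  calc ‖∑ i ∈ s, c i‖ ^ 2 ≤ (∑ i ∈ s, ‖c i‖) ^ 2 := by gcongr; exact norm_sum_le s c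
    _ ≤ s.card * ∑ i ∈ s, ‖c i‖ ^ 2 := sq_sum_le_card_mul_sum_sq

variable [DecidableEq ι] {p : ℝ}

variable (𝕜 ι) in
/-- The equicorrelation matrix: the correlation matrix, with diagonal entries `1`, in which all
off-diagonal correlations equal `p`. -/
def equicorrelationMatrix (p : ℝ) : Matrix ι ι 𝕜 := of fun i j ↦ if i = j then 1 else (p : 𝕜)

lemma isHermitian_equicorrelationMatrix (p : ℝ) :
    (equicorrelationMatrix 𝕜 ι p).IsHermitian := by
  ext i j
  rcases eq_or_ne i j with rfl | hij
  · simp [equicorrelationMatrix]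
  · simp [equicorrelationMatrix, hij, hij.symm]

variable [Fintype ι]

lemma equicorrelationMatrix_mulVec (p : ℝ) (c : ι → 𝕜) (i : ι) :
    (equicorrelationMatrix 𝕜 ι p *ᵥ c) i = (1 - p) * c i + p * ∑ j, c j := by
  have hentry (j : ι) : equicorrelationMatrix 𝕜 ι p i j * c j =
      (if i = j then (1 - p) * c j else 0) + p * c j := by
    simp only [equicorrelationMatrix, of_apply]
    split_ifs <;> ring
  simp [mulVec, dotProduct, hentry, Finset.sum_add_distrib, Finset.mul_sum]

lemma star_dotProduct_equicorrelationMatrix_mulVec (p : ℝ) (c : ι → 𝕜) :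
    star c ⬝ᵥ equicorrelationMatrix 𝕜 ι p *ᵥ c =
      ((1 - p) * ∑ i, ‖c i‖ ^ 2 + p * ‖∑ i, c i‖ ^ 2 : ℝ) := by
  push_cast
  simp only [dotProduct, equicorrelationMatrix_mulVec, Pi.star_apply, RCLike.star_def,
    ← RCLike.conj_mul, map_sum, mul_add, Finset.sum_add_distrib, Finset.mul_sum, Finset.sum_mul]
  congr 1
  · exact Finset.sum_congr rfl fun i _ ↦ by ring
  · rw [Finset.sum_comm]
    exact Finset.sum_congr rfl fun i _ ↦ Finset.sum_congr rfl fun j _ ↦ by ring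

lemma posDef_equicorrelationMatrix (hp_lower : -1 < (Fintype.card ι - 1) * p) (hp_upper : p < 1) :
    (equicorrelationMatrix 𝕜 ι p).PosDef := by
  refine .of_dotProduct_mulVec_pos (isHermitian_equicorrelationMatrix p) fun c hc ↦ ?_
  rw [star_dotProduct_equicorrelationMatrix_mulVec, RCLike.ofReal_pos]
  obtain ⟨k, hk⟩ := Function.ne_iff.mp hc
  have hpos : 0 < ∑ i, ‖c i‖ ^ 2 :=
    Finset.sum_pos' (fun i _ ↦ sq_nonneg ‖c i‖)
      ⟨k, Finset.mem_univ k, pow_pos (norm_pos_iff.mpr hk) 2⟩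
  rcases le_or_gt 0 p with hp | hp
  · have := mul_pos (sub_pos.mpr hp_upper) hpos
    positivity
  · calc 0 < (1 + (Fintype.card ι - 1) * p) * ∑ i, ‖c i‖ ^ 2 := mul_pos (by linarith) hpos
      _ = (1 - p) * ∑ i, ‖c i‖ ^ 2 + p * (Fintype.card ι * ∑ i, ‖c i‖ ^ 2) := by ring
      _ ≤ (1 - p) * ∑ i, ‖c i‖ ^ 2 + p * ‖∑ i, c i‖ ^ 2 := by
        gcongr _ + ?_
        exact mul_le_mul_of_nonpos_left (norm_sum_sq_le_card_mul_sum_norm_sq _ c) hp.le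

end Equicorrelation

theorem gram_schmidt_p_exists_general [Fintype ι] [LinearOrder ι]
    {V : Type*} [NormedAddCommGroup V] [InnerProductSpace 𝕜 V]
    {x : ι → V} (hx : LinearIndependent 𝕜 x)
    {p : ℝ} (hp_lower : -1 < (Fintype.card ι - 1) * p) (hp_upper : p < 1) :
    ∃ z : ι → V,
      (∀ i, Submodule.span 𝕜 (z '' Iic i) = Submodule.span 𝕜 (x '' Iic i)) ∧
      (∀ i, ‖z i‖ = 1) ∧
      (∀ i j, i ≠ j → inner 𝕜 (z i) (z j) = p) := by
  obtain ⟨z, hspan, hgram⟩ := exists_span_image_Iic_eq_and_gram_eq_of_posDef hx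
    (posDef_equicorrelationMatrix (𝕜 := 𝕜) hp_lower hp_upper)
  have hinner (i j : ι) : inner 𝕜 (z i) (z j) = if i = j then 1 else (p : 𝕜) :=
    congr_fun₂ hgram i j
  refine ⟨z, hspan, fun i ↦ ?_, fun i j hij ↦ by rw [hinner, if_neg hij]⟩
  rw [norm_eq_sqrt_re_inner (𝕜 := 𝕜), hinner, if_pos rfl, RCLike.one_re, Real.sqrt_one]

end

theorem gram_schmidt_p_exists
    {V : Type*} [NormedAddCommGroup V] [InnerProductSpace ℝ V]
    (n : ℕ) (hn : 2 ≤ n) (x : Fin n → V) (hx : LinearIndependent ℝ x)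
    (p : ℝ) (hp1 : -(1 / ((n : ℝ) - 1)) < p) (hp2 : p < 1) :
    ∃ z : Fin n → V,
      (∀ i : Fin n,
        Submodule.span ℝ (z '' Set.Iic i) = Submodule.span ℝ (x '' Set.Iic i)) ∧
      (∀ i : Fin n, ‖z i‖ = 1) ∧
      (∀ i j : Fin n, i ≠ j → ⟪z i, z j⟫ = p) := by
  have hn' : (0 : ℝ) < n - 1 := by rw [sub_pos, Nat.one_lt_cast]; exact hn
  refine gram_schmidt_p_exists_general hx ?_ hp2
  rwa [Fintype.card_fin, ← div_lt_iff₀' hn', neg_div]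
end

section
/- Let V be a real inner product space, let n ≥ 2, and let z_1, …, z_n be linearly independent vectors in V with ‖z_i‖ = 1 for all 1 ≤ i ≤ n and ‖z_i - z_j‖ = d for all i ≠ j, where 0 < d < 2. Then d < √(2n/(n-1)). -/
/-!
The sum of all squared distances between `n` points equals `2 n ∑ ‖z i‖² - 2 ‖∑ z i‖²`, so points
of a ball that are pairwise far apart must have a small sum. When that sum is nonzero, as it is for
linearly independent points, the resulting bound on the separation is strict.
-/

open Finset

theorem card_mul_card_sub_one_mul_sq_le_sum_sum_dist_sq {ι X : Type*} [PseudoMetricSpace X]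
    {s : Finset ι} {z : ι → X} {d : ℝ} (hd : 0 ≤ d)
    (hsep : (s : Set ι).Pairwise fun i j ↦ d ≤ dist (z i) (z j)) :
    (#s : ℝ) * (#s - 1) * d ^ 2 ≤ ∑ i ∈ s, ∑ j ∈ s, dist (z i) (z j) ^ 2 := by
  classical
  have row_bound : ∀ i ∈ s, ((#s : ℝ) - 1) * d ^ 2 ≤ ∑ j ∈ s, dist (z i) (z j) ^ 2 := fun i hi ↦
    calc ((#s : ℝ) - 1) * d ^ 2 = ∑ _j ∈ s.erase i, d ^ 2 := by
          rw [sum_const, nsmul_eq_mul, cast_card_erase_of_mem hi]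
      _ ≤ ∑ j ∈ s.erase i, dist (z i) (z j) ^ 2 := sum_le_sum fun _ hj ↦
          pow_le_pow_left₀ hd (hsep hi (mem_of_mem_erase hj) (ne_of_mem_erase hj).symm) 2
      _ ≤ ∑ j ∈ s, dist (z i) (z j) ^ 2 :=
          sum_le_sum_of_subset_of_nonneg (erase_subset i s) fun _ _ _ ↦ sq_nonneg _
  simpa only [nsmul_eq_mul, mul_assoc] using card_nsmul_le_sum s _ _ row_bound

section Seminormed

variable {ι V : Type*} [SeminormedAddCommGroup V] [InnerProductSpace ℝ V]

theorem sum_sum_norm_sub_sq_real (s : Finset ι) (z : ι → V) :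
    ∑ i ∈ s, ∑ j ∈ s, ‖z i - z j‖ ^ 2 = 2 * (#s * ∑ i ∈ s, ‖z i‖ ^ 2 - ‖∑ i ∈ s, z i‖ ^ 2) := by
  have inner_sum_self : ∑ i ∈ s, ∑ j ∈ s, inner ℝ (z i) (z j) = ‖∑ i ∈ s, z i‖ ^ 2 := by
    rw [← real_inner_self_eq_norm_sq, sum_inner]
    simp only [inner_sum]
  simp only [norm_sub_sq_real, sum_add_distrib, sum_sub_distrib, ← mul_sum, inner_sum_self,
    sum_const, nsmul_eq_mul]
  ring

theorem norm_sum_sq_le_of_pairwise_le_norm_sub {s : Finset ι} {z : ι → V} {r d : ℝ} (hd : 0 ≤ d)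
    (hnorm : ∀ i ∈ s, ‖z i‖ ≤ r) (hsep : (s : Set ι).Pairwise fun i j ↦ d ≤ ‖z i - z j‖) :
    ‖∑ i ∈ s, z i‖ ^ 2 ≤ #s * (#s * r ^ 2 - (#s - 1) * d ^ 2 / 2) := by
  have sum_sq_le : ∑ i ∈ s, ‖z i‖ ^ 2 ≤ #s * r ^ 2 := by
    simpa only [nsmul_eq_mul] using
      sum_le_card_nsmul s _ _ fun i hi ↦ pow_le_pow_left₀ (norm_nonneg _) (hnorm i hi) 2
  have card_mul_sum_sq_le := mul_le_mul_of_nonneg_left sum_sq_le (Nat.cast_nonneg (α := ℝ) #s)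
  have separation : (#s : ℝ) * (#s - 1) * d ^ 2 ≤ ∑ i ∈ s, ∑ j ∈ s, ‖z i - z j‖ ^ 2 := by
    simp only [← dist_eq_norm] at hsep ⊢
    exact card_mul_card_sub_one_mul_sq_le_sum_sum_dist_sq hd hsep
  rw [sum_sum_norm_sub_sq_real] at separation
  linarith

end Seminormed

theorem sum_ne_zero_of_linearIndependent {ι R M : Type*} [Fintype ι] [Nonempty ι] [Ring R]
    [Nontrivial R] [AddCommGroup M] [Module R M] {z : ι → M} (hz : LinearIndependent R z) :
    ∑ i, z i ≠ 0 := fun hsum ↦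
  one_ne_zero <| Fintype.linearIndependent_iff.mp hz (fun _ ↦ 1) (by simpa only [one_smul])
    (Classical.arbitrary ι)

theorem gram_schmidt_d_necessary_general {ι V : Type*} [Fintype ι] [Nontrivial ι]
    [NormedAddCommGroup V] [InnerProductSpace ℝ V] {z : ι → V} {r d : ℝ}
    (hnorm : ∀ i, ‖z i‖ ≤ r) (hsep : Pairwise fun i j ↦ d ≤ ‖z i - z j‖) (hsum : ∑ i, z i ≠ 0) :
    d < r * √(2 * Fintype.card ι / (Fintype.card ι - 1)) := by
  have hr : 0 ≤ r := (norm_nonneg _).trans (hnorm (Classical.arbitrary ι))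
  obtain hd | hd := lt_or_ge d 0
  · exact hd.trans_le (mul_nonneg hr (Real.sqrt_nonneg _))
  have hcard : (1 : ℝ) < Fintype.card ι := Nat.one_lt_cast.mpr Fintype.one_lt_card
  have sum_sq_pos : 0 < ‖∑ i, z i‖ ^ 2 := pow_pos (norm_pos_iff.mpr hsum) 2
  have sum_sq_le : ‖∑ i, z i‖ ^ 2 ≤
      Fintype.card ι * (Fintype.card ι * r ^ 2 - (Fintype.card ι - 1) * d ^ 2 / 2) :=
    norm_sum_sq_le_of_pairwise_le_norm_sub hd (fun i _ ↦ hnorm i) (hsep.set_pairwise _)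
  have slack_pos : 0 < Fintype.card ι * r ^ 2 - (Fintype.card ι - 1) * d ^ 2 / 2 :=
    pos_of_mul_pos_right (sum_sq_pos.trans_le sum_sq_le) (Nat.cast_nonneg _)
  rw [← Real.sqrt_sq hr, ← Real.sqrt_mul (sq_nonneg r)]
  apply Real.lt_sqrt_of_sq_lt
  rw [← mul_div_assoc, lt_div_iff₀ (sub_pos.mpr hcard)]
  linarith

theorem gram_schmidt_d_necessary
    {V : Type*} [NormedAddCommGroup V] [InnerProductSpace ℝ V]
    (n : ℕ) (hn : 2 ≤ n) (z : Fin n → V) (hz : LinearIndependent ℝ z)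
    (d : ℝ) (hd1 : 0 < d) (hd2 : d < 2)
    (hnorm : ∀ i : Fin n, ‖z i‖ = 1)
    (hdist : ∀ i j : Fin n, i ≠ j → ‖z i - z j‖ = d) :
    d < Real.sqrt (2 * (n : ℝ) / ((n : ℝ) - 1)) := by
  have : Nontrivial (Fin n) := Fin.nontrivial_iff_two_le.mpr hn
  simpa only [Fintype.card_fin, one_mul] using
    gram_schmidt_d_necessary_general (fun i ↦ (hnorm i).le)
      (fun i j hij ↦ (hdist i j hij).ge) (sum_ne_zero_of_linearIndependent hz)
end

section
/- Let V be a real inner product space, let (x_i)_{i=1}^∞ be a linearly independent sequence of vectors in V, and let d be a real number with 0 < d ≤ √2. Then there exists a sequence (z_i)_{i=1}^∞ in V such that span{z_1, …, z_i} = span{x_1, …, x_i} for every i ≥ 1, ‖z_i‖ = 1 for all i ≥ 1, and ‖z_i - z_j‖ = d for all i ≠ j. -/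
/-!
A family of unit vectors has all mutual distances equal to `d` as soon as all its mutual inner
products equal `c = 1 - d ^ 2 / 2`. After orthonormalizing `x` to `e`, build such a family
recursively: if `z₀, …, zₙ₋₁` are unit vectors with mutual inner products `c` and
`D = 1 + (n - 1) c`, then each `zᵢ` has inner product `D` with their sum `S`, so `(c / D) • S` has
inner product `c` with every `zᵢ`. Its squared norm is `n c ^ 2 / D`, and adding a multiple of `eₙ`
brings the norm up to `1` because `D - n c ^ 2 = (1 - c) (1 + n c)` is positive.
-/

section TriangularSpan

variable {R M ι : Type*} [Ring R] [AddCommGroup M] [Module R M] [Preorder ι]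
  {z e : ι → M} {b : ι → R}

lemma left_mem_span_image_Iic_of_sub_smul_mem [WellFoundedLT ι]
    (hz : ∀ i, z i - b i • e i ∈ Submodule.span R (z '' Set.Iio i)) (i : ι) :
    z i ∈ Submodule.span R (e '' Set.Iic i) := by
  induction i using WellFoundedLT.induction with
  | ind i ih =>
    have span_le : Submodule.span R (z '' Set.Iio i) ≤ Submodule.span R (e '' Set.Iic i) := by
      rw [Submodule.span_le, Set.image_subset_iff]
      exact fun j hj => Submodule.span_mono (Set.image_mono (Set.Iic_subset_Iic.2 (le_of_lt hj)))
        (ih j hj)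
    have right_mem : e i ∈ Submodule.span R (e '' Set.Iic i) :=
      Submodule.subset_span (Set.mem_image_of_mem e Set.self_mem_Iic)
    simpa only [sub_add_cancel] using
      Submodule.add_mem _ (span_le (hz i)) (Submodule.smul_mem _ (b i) right_mem)

lemma right_mem_span_image_Iic_of_sub_smul_mem {i : ι} {r : R} (hr : IsUnit r)
    (hz : z i - r • e i ∈ Submodule.span R (z '' Set.Iio i)) :
    e i ∈ Submodule.span R (z '' Set.Iic i) := by
  have left_mem : z i ∈ Submodule.span R (z '' Set.Iic i) :=
    Submodule.subset_span (Set.mem_image_of_mem z Set.self_mem_Iic)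
  have sub_mem : z i - r • e i ∈ Submodule.span R (z '' Set.Iic i) :=
    Submodule.span_mono (Set.image_mono Set.Iio_subset_Iic_self) hz
  rw [← Submodule.smul_mem_iff_of_isUnit _ hr]
  simpa only [sub_sub_cancel] using Submodule.sub_mem _ left_mem sub_mem

lemma span_image_Iic_eq_of_sub_smul_mem [WellFoundedLT ι] (hb : ∀ i, IsUnit (b i))
    (hz : ∀ i, z i - b i • e i ∈ Submodule.span R (z '' Set.Iio i)) (i : ι) :
    Submodule.span R (z '' Set.Iic i) = Submodule.span R (e '' Set.Iic i) := by
  apply Submodule.span_eq_span <;> rintro _ ⟨j, hj, rfl⟩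
  · exact Submodule.span_mono (Set.image_mono (Set.Iic_subset_Iic.2 hj))
      (left_mem_span_image_Iic_of_sub_smul_mem hz j)
  · exact Submodule.span_mono (Set.image_mono (Set.Iic_subset_Iic.2 hj))
      (right_mem_span_image_Iic_of_sub_smul_mem (hb j) (hz j))

end TriangularSpan

section Height

/-- The distance from a unit vector to the span of an equiangular family of `n` vectors with which
it has inner products `c`, see `Equiangular.norm_extension`. It is meant for `c < 1` and
`0 < 1 + n * c`, where the radicand is positive. -/
noncomputable def equiangularHeight (n : ℕ) (c : ℝ) : ℝ :=
  √((1 - c) * (1 + n * c) / (1 + (n - 1) * c))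

lemma one_add_sub_one_mul_pos {t c : ℝ} (ht : 0 ≤ t) (hc : c < 1) (htc : 0 < 1 + t * c) :
    0 < 1 + (t - 1) * c := by
  rcases le_total c 0 with h | h
  · linarith
  · linarith [mul_nonneg ht h]

lemma equiangularHeight_pos {n : ℕ} {c : ℝ} (hc : c < 1) (hn : 0 < 1 + n * c) :
    0 < equiangularHeight n c :=
  Real.sqrt_pos.2 <| div_pos (mul_pos (sub_pos.2 hc) hn)
    (one_add_sub_one_mul_pos (Nat.cast_nonneg n) hc hn)

lemma equiangularHeight_sq {n : ℕ} {c : ℝ} (hc : c < 1) (hn : 0 < 1 + n * c) :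
    equiangularHeight n c ^ 2 = 1 - n * c ^ 2 / (1 + (n - 1) * c) := by
  have hD := one_add_sub_one_mul_pos (Nat.cast_nonneg n) hc hn
  rw [equiangularHeight, Real.sq_sqrt (by have := sub_pos.2 hc; positivity), one_sub_div hD.ne']
  ring

end Height

section Equiangular

variable (𝕜 : Type*) {E ι κ : Type*} [RCLike 𝕜] [NormedAddCommGroup E] [InnerProductSpace 𝕜 E]

/-- A family of unit vectors whose mutual inner products all equal the real number `c`; for `c = 0`
this is `Orthonormal`. The sign of the inner products is part of the notion, so this is stronger
than requiring that the lines spanned by the vectors be equiangular. -/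
def Equiangular (c : ℝ) (v : ι → E) : Prop :=
  (∀ i, ‖v i‖ = 1) ∧ Pairwise fun i j => inner 𝕜 (v i) (v j) = (c : 𝕜)

/-- The vector that prolongs a finite equiangular family `v`, given a unit vector `u` orthogonal
to it: its component along `v` is a multiple of `∑ i, v i`, and the coefficient of `u` normalizes
it. -/
noncomputable def equiangularExtension [Fintype κ] (c : ℝ) (v : κ → E) (u : E) : E :=
  ((c / (1 + (Fintype.card κ - 1) * c) : ℝ) : 𝕜) • ∑ i, v i +
    (equiangularHeight (Fintype.card κ) c : 𝕜) • u

/-- The family obtained from `e` by prolonging, at each index `i`, the vectors already constructed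
with the help of `e i`. It is meant for orthonormal `e`. -/
noncomputable def equiangularOfOrthonormal [LinearOrder ι] [LocallyFiniteOrderBot ι]
    [WellFoundedLT ι] (c : ℝ) (e : ι → E) (i : ι) : E :=
  equiangularExtension 𝕜 c (fun j : Finset.Iio i => equiangularOfOrthonormal c e j) (e i)
termination_by wellFounded_lt.wrap i
decreasing_by exact Finset.mem_Iio.1 j.2

variable {𝕜} {c : ℝ}

namespace Equiangular

lemma of_lt [LinearOrder ι] {v : ι → E} (norm_eq : ∀ i, ‖v i‖ = 1)
    (inner_eq : ∀ i j, i < j → inner 𝕜 (v i) (v j) = (c : 𝕜)) : Equiangular 𝕜 c v := by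
  refine ⟨norm_eq, fun i j hij => ?_⟩
  rcases hij.lt_or_gt with h | h
  · exact inner_eq i j h
  · rw [← inner_conj_symm, inner_eq j i h, RCLike.conj_ofReal]

lemma norm_sub {v : ι → E} (hv : Equiangular 𝕜 c v) {i j : ι} (hij : i ≠ j) :
    ‖v i - v j‖ = √(2 - 2 * c) := by
  have norm_sq : ‖v i - v j‖ ^ 2 = 2 - 2 * c := by
    rw [@norm_sub_sq 𝕜, hv.1, hv.1, hv.2 hij, RCLike.ofReal_re]
    ring
  rw [← norm_sq, Real.sqrt_sq (norm_nonneg _)]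

variable [Fintype κ] {v : κ → E} {u : E}

lemma inner_sum (hv : Equiangular 𝕜 c v) (i : κ) :
    inner 𝕜 (v i) (∑ j, v j) = ((1 + (Fintype.card κ - 1) * c : ℝ) : 𝕜) := by
  classical
  have inner_erase : ∑ j ∈ Finset.univ.erase i, inner 𝕜 (v i) (v j) =
      ((Fintype.card κ - 1) * c : 𝕜) := by
    rw [Finset.sum_congr rfl fun j hj => hv.2 (Finset.ne_of_mem_erase hj).symm,
      Finset.sum_const, nsmul_eq_mul, Finset.card_erase_of_mem (Finset.mem_univ i),
      Finset.card_univ, Nat.cast_pred (Fintype.card_pos_iff.2 ⟨i⟩)]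
  rw [_root_.inner_sum, ← Finset.add_sum_erase _ _ (Finset.mem_univ i), inner_erase,
    inner_self_eq_norm_sq_to_K, hv.1]
  push_cast
  ring

lemma norm_sum_sq (hv : Equiangular 𝕜 c v) :
    ‖∑ i, v i‖ ^ 2 = Fintype.card κ * (1 + (Fintype.card κ - 1) * c) := by
  have inner_self : inner 𝕜 (∑ i, v i) (∑ i, v i) =
      ((Fintype.card κ * (1 + (Fintype.card κ - 1) * c) : ℝ) : 𝕜) := by
    rw [sum_inner, Finset.sum_congr rfl fun i _ => hv.inner_sum i, Finset.sum_const,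
      Finset.card_univ, nsmul_eq_mul]
    push_cast
    ring
  rw [← inner_self_eq_norm_sq (𝕜 := 𝕜), inner_self, RCLike.ofReal_re]

lemma inner_extension (hv : Equiangular 𝕜 c v) (hu : ∀ i, inner 𝕜 (v i) u = 0) (hc : c < 1)
    (hcard : 0 < 1 + Fintype.card κ * c) (i : κ) :
    inner 𝕜 (v i) (equiangularExtension 𝕜 c v u) = (c : 𝕜) := by
  have hD := one_add_sub_one_mul_pos (Nat.cast_nonneg _) hc hcard
  rw [equiangularExtension, inner_add_right, inner_smul_right, inner_smul_right, hv.inner_sum, hu,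
    mul_zero, add_zero, ← RCLike.ofReal_mul, div_mul_cancel₀ _ hD.ne']

lemma norm_extension (hv : Equiangular 𝕜 c v) (hu : ∀ i, inner 𝕜 (v i) u = 0) (hu_norm : ‖u‖ = 1)
    (hc : c < 1) (hcard : 0 < 1 + Fintype.card κ * c) :
    ‖equiangularExtension 𝕜 c v u‖ = 1 := by
  have hD := one_add_sub_one_mul_pos (Nat.cast_nonneg _) hc hcard
  have norm_sum : ‖((c / (1 + (Fintype.card κ - 1) * c) : ℝ) : 𝕜) • ∑ i, v i‖ ^ 2 =
      Fintype.card κ * c ^ 2 / (1 + (Fintype.card κ - 1) * c) := by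
    rw [norm_smul, mul_pow, RCLike.norm_ofReal, sq_abs, hv.norm_sum_sq]
    generalize 1 + ((Fintype.card κ : ℝ) - 1) * c = D at hD
    field_simp
  have norm_height : ‖(equiangularHeight (Fintype.card κ) c : 𝕜) • u‖ ^ 2 =
      1 - Fintype.card κ * c ^ 2 / (1 + (Fintype.card κ - 1) * c) := by
    rw [norm_smul, hu_norm, mul_one, RCLike.norm_ofReal, sq_abs, equiangularHeight_sq hc hcard]
  have orthogonal : inner 𝕜 (((c / (1 + (Fintype.card κ - 1) * c) : ℝ) : 𝕜) • ∑ i, v i)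
      ((equiangularHeight (Fintype.card κ) c : 𝕜) • u) = 0 := by
    rw [inner_smul_left, inner_smul_right, sum_inner, Finset.sum_eq_zero fun i _ => hu i,
      mul_zero, mul_zero]
  have norm_sq : ‖equiangularExtension 𝕜 c v u‖ ^ 2 = 1 := by
    rw [equiangularExtension, @norm_add_sq 𝕜, orthogonal, map_zero, norm_sum, norm_height]
    ring
  exact (pow_eq_one_iff_of_nonneg (norm_nonneg _) two_ne_zero).1 norm_sq

end Equiangular

section OfOrthonormal

variable [LinearOrder ι] [LocallyFiniteOrderBot ι] [WellFoundedLT ι] {e : ι → E}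

lemma equiangularOfOrthonormal_eq_extension (c : ℝ) (e : ι → E) (i : ι) :
    equiangularOfOrthonormal 𝕜 c e i = equiangularExtension 𝕜 c
      (fun j : Finset.Iio i => equiangularOfOrthonormal 𝕜 c e j) (e i) := by
  rw [equiangularOfOrthonormal]

lemma equiangularOfOrthonormal_sub_smul_mem_span (c : ℝ) (e : ι → E) (i : ι) :
    equiangularOfOrthonormal 𝕜 c e i -
        (equiangularHeight (Finset.Iio i).card c : 𝕜) • e i ∈
      Submodule.span 𝕜 (equiangularOfOrthonormal 𝕜 c e '' Set.Iio i) := by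
  rw [equiangularOfOrthonormal_eq_extension, equiangularExtension, Fintype.card_coe,
    add_sub_cancel_right]
  exact Submodule.smul_mem _ _ <| Submodule.sum_mem _ fun j _ =>
    Submodule.subset_span (Set.mem_image_of_mem _ (Finset.mem_Iio.1 j.2))

lemma span_equiangularOfOrthonormal_Iic (e : ι → E) (hc : c < 1)
    (hcard : ∀ i : ι, 0 < 1 + (Finset.Iio i).card * c) (i : ι) :
    Submodule.span 𝕜 (equiangularOfOrthonormal 𝕜 c e '' Set.Iic i) =
      Submodule.span 𝕜 (e '' Set.Iic i) := by
  refine span_image_Iic_eq_of_sub_smul_mem (fun j => ?_)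
    (equiangularOfOrthonormal_sub_smul_mem_span c e) i
  exact (RCLike.ofReal_ne_zero.2 (equiangularHeight_pos hc (hcard j)).ne').isUnit

lemma inner_equiangularOfOrthonormal_of_lt (he : Orthonormal 𝕜 e) (c : ℝ) {i j : ι} (hij : i < j) :
    inner 𝕜 (equiangularOfOrthonormal 𝕜 c e i) (e j) = 0 := by
  have span_orthogonal : Submodule.span 𝕜 (e '' Set.Iic i) ⟂ Submodule.span 𝕜 {e j} := by
    rw [Submodule.isOrtho_span]
    rintro _ ⟨k, hk, rfl⟩ _ rfl
    exact he.2 (hk.trans_lt hij).ne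
  exact span_orthogonal.inner_eq
    (left_mem_span_image_Iic_of_sub_smul_mem (equiangularOfOrthonormal_sub_smul_mem_span c e) i)
    (Submodule.mem_span_singleton_self _)

lemma equiangular_equiangularOfOrthonormal (he : Orthonormal 𝕜 e) (hc : c < 1)
    (hcard : ∀ i : ι, 0 < 1 + (Finset.Iio i).card * c) :
    Equiangular 𝕜 c (equiangularOfOrthonormal 𝕜 c e) := by
  suffices h : ∀ i, ‖equiangularOfOrthonormal 𝕜 c e i‖ = 1 ∧ ∀ j < i,
      inner 𝕜 (equiangularOfOrthonormal 𝕜 c e j) (equiangularOfOrthonormal 𝕜 c e i) = (c : 𝕜) from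
    .of_lt (fun i => (h i).1) fun i j => (h j).2 i
  intro i
  induction i using WellFoundedLT.induction with
  | ind i ih =>
    have previous : Equiangular 𝕜 c
        fun j : Finset.Iio i => equiangularOfOrthonormal 𝕜 c e j :=
      .of_lt (fun j => (ih j (Finset.mem_Iio.1 j.2)).1)
        fun j k hjk => (ih k (Finset.mem_Iio.1 k.2)).2 j hjk
    have orthogonal : ∀ j : Finset.Iio i, inner 𝕜 (equiangularOfOrthonormal 𝕜 c e j) (e i) = 0 :=
      fun j => inner_equiangularOfOrthonormal_of_lt he c (Finset.mem_Iio.1 j.2)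
    have card_pos : 0 < 1 + Fintype.card (Finset.Iio i) * c := by
      rw [Fintype.card_coe]
      exact hcard i
    rw [equiangularOfOrthonormal_eq_extension c e i]
    exact ⟨previous.norm_extension orthogonal (he.1 i) hc card_pos, fun j hj =>
      previous.inner_extension orthogonal hc card_pos ⟨j, Finset.mem_Iio.2 hj⟩⟩

end OfOrthonormal

/-- For `ι = Fin n` the bound on `d` reads `d ^ 2 < 2 * n / (n - 1)`, the condition for a regular
simplex with `n` linearly independent unit vertices. -/
theorem gram_schmidt_d_exists_infinite_general [LinearOrder ι] [LocallyFiniteOrderBot ι]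
    [WellFoundedLT ι] (x : ι → E) (hx : LinearIndependent 𝕜 x) (d : ℝ) (hd : 0 < d)
    (hcard : ∀ i : ι, (Finset.Iio i).card * (d ^ 2 - 2) < 2) :
    ∃ z : ι → E,
      (∀ i, Submodule.span 𝕜 (z '' Set.Iic i) = Submodule.span 𝕜 (x '' Set.Iic i)) ∧
      (∀ i, ‖z i‖ = 1) ∧
      (∀ i j, i ≠ j → ‖z i - z j‖ = d) := by
  have hc : 1 - d ^ 2 / 2 < 1 := by linarith [pow_pos hd 2]
  have hcard' (i : ι) : 0 < 1 + (Finset.Iio i).card * (1 - d ^ 2 / 2) := by linarith [hcard i]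
  have equiangular := equiangular_equiangularOfOrthonormal
    (InnerProductSpace.gramSchmidtNormed_orthonormal hx) hc hcard'
  refine ⟨_, fun i => ?_, equiangular.1, fun i j hij => ?_⟩
  · rw [span_equiangularOfOrthonormal_Iic _ hc hcard', InnerProductSpace.span_gramSchmidtNormed,
      InnerProductSpace.span_gramSchmidt_Iic]
  · rw [equiangular.norm_sub hij, show 2 - 2 * (1 - d ^ 2 / 2) = d ^ 2 by ring, Real.sqrt_sq hd.le]

end Equiangular

theorem gram_schmidt_d_exists_infinite
    {V : Type*} [NormedAddCommGroup V] [InnerProductSpace ℝ V]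
    (x : ℕ → V) (hx : LinearIndependent ℝ x)
    (d : ℝ) (hd1 : 0 < d) (hd2 : d ≤ Real.sqrt 2) :
    ∃ z : ℕ → V,
      (∀ i : ℕ,
        Submodule.span ℝ (z '' Set.Iic i) = Submodule.span ℝ (x '' Set.Iic i)) ∧
      (∀ i : ℕ, ‖z i‖ = 1) ∧
      (∀ i j : ℕ, i ≠ j → ‖z i - z j‖ = d) := by
  have d_sq_le : d ^ 2 ≤ 2 := (Real.le_sqrt' hd1).1 hd2
  exact gram_schmidt_d_exists_infinite_general x hx d hd1 fun i =>
    (mul_nonpos_of_nonneg_of_nonpos (Nat.cast_nonneg _) (sub_nonpos.2 d_sq_le)).trans_lt two_pos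
end

section
/- Let V be a real inner product space, let k ≥ 1, let p be a real number with -1/k < p < 1, and let z_1, …, z_k be vectors in V with ‖z_i‖ = 1 for all i and ⟪z_i, z_j⟫ = p for all i ≠ j. Let y be a unit vector in V orthogonal to each z_i, 1 ≤ i ≤ k. Define w = α·y + β·(z_1 + z_2 + ⋯ + z_k), where α = √((1-p)(1+pk)/(1+p(k-1))) and β = p/(1+p(k-1)). Then ‖w‖ = 1 and ⟪w, z_i⟫ = p for every 1 ≤ i ≤ k. -/
open scoped RealInnerProductSpace

/-!
Write `S = ∑ i, z i`. Every `z i` has the same inner product `D = 1 + p (k - 1)` with `S`, so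
`β = p / D` is the coefficient giving `α y + β S` inner product `p` with each `z i`. Since
`‖S‖ ^ 2 = k D`, Pythagoras turns the norm condition into `α ^ 2 + k p ^ 2 / D = 1`, which holds
because `(1 - p) (1 + p k) + k p ^ 2 = D`.
-/

section Equiangular

variable {𝕜 V ι : Type*} [RCLike 𝕜] [SeminormedAddCommGroup V] [InnerProductSpace 𝕜 V] [Fintype ι]
  {z : ι → V}

theorem inner_sum_left_of_equiangular {p : 𝕜} (hnorm : ∀ i, ‖z i‖ = 1)
    (hinner : Pairwise fun i j ↦ inner 𝕜 (z i) (z j) = p) (i : ι) :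
    inner 𝕜 (∑ j, z j) (z i) = 1 + p * ((Fintype.card ι : 𝕜) - 1) := by
  classical
  have hself : inner 𝕜 (z i) (z i) = 1 := by simp [inner_self_eq_norm_sq_to_K, hnorm]
  have hothers : ∑ j ∈ Finset.univ.erase i, inner 𝕜 (z j) (z i)
      = ((Fintype.card ι : 𝕜) - 1) * p := by
    rw [Finset.sum_congr rfl fun j hj ↦ hinner (Finset.ne_of_mem_erase hj), Finset.sum_const,
      nsmul_eq_mul, Finset.cast_card_erase_of_mem (Finset.mem_univ i), Finset.card_univ]
  rw [sum_inner, ← Finset.add_sum_erase _ _ (Finset.mem_univ i), hself, hothers, mul_comm]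

theorem norm_sum_sq_of_equiangular {p : ℝ} (hnorm : ∀ i, ‖z i‖ = 1)
    (hinner : Pairwise fun i j ↦ inner 𝕜 (z i) (z j) = (p : 𝕜)) :
    ‖∑ i, z i‖ ^ 2 = Fintype.card ι * (1 + p * ((Fintype.card ι : ℝ) - 1)) := by
  have hsum_self : inner 𝕜 (∑ i, z i) (∑ i, z i)
      = (Fintype.card ι : 𝕜) * (1 + p * ((Fintype.card ι : 𝕜) - 1)) := by
    simp only [inner_sum (𝕜 := 𝕜) Finset.univ z, inner_sum_left_of_equiangular hnorm hinner,
      Finset.sum_const, Finset.card_univ, nsmul_eq_mul]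
  rw [inner_self_eq_norm_sq_to_K] at hsum_self
  exact_mod_cast hsum_self

end Equiangular

theorem norm_smul_add_smul_sq_of_inner_eq_zero {𝕜 V : Type*} [RCLike 𝕜] [SeminormedAddCommGroup V]
    [InnerProductSpace 𝕜 V] {x y : V} (h : inner 𝕜 x y = 0) (a b : 𝕜) :
    ‖a • x + b • y‖ ^ 2 = ‖a‖ ^ 2 * ‖x‖ ^ 2 + ‖b‖ ^ 2 * ‖y‖ ^ 2 := by
  simp [norm_add_sq (𝕜 := 𝕜), inner_smul_left, inner_smul_right, h, norm_smul, mul_pow]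

theorem one_add_mul_nonneg_of_neg_one_div_le {k p : ℝ} (hk : 0 < k) (hp : -(1 / k) ≤ p) :
    0 ≤ 1 + p * k := by
  rw [← neg_div, div_le_iff₀ hk] at hp
  linarith

theorem one_add_mul_sub_one_pos_of_neg_one_div_le {k p : ℝ} (hk : 1 ≤ k) (hp : -(1 / k) ≤ p) :
    0 < 1 + p * (k - 1) := by
  rcases le_or_gt 0 p with hp_nonneg | hp_neg
  · linarith [mul_nonneg hp_nonneg (sub_nonneg.2 hk)]
  · linarith [one_add_mul_nonneg_of_neg_one_div_le (zero_lt_one.trans_le hk) hp]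

theorem sqrt_sq_add_div_sq_mul_eq_one {k p : ℝ} (hk : 1 ≤ k) (hp1 : -(1 / k) ≤ p) (hp2 : p ≤ 1) :
    √((1 - p) * (1 + p * k) / (1 + p * (k - 1))) ^ 2
      + (p / (1 + p * (k - 1))) ^ 2 * (k * (1 + p * (k - 1))) = 1 := by
  have hpos := one_add_mul_sub_one_pos_of_neg_one_div_le hk hp1
  have hnonneg := one_add_mul_nonneg_of_neg_one_div_le (zero_lt_one.trans_le hk) hp1
  rw [Real.sq_sqrt (div_nonneg (mul_nonneg (sub_nonneg.2 hp2) hnonneg) hpos.le)]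
  field_simp
  ring

theorem gram_schmidt_p_step_general {𝕜 V ι : Type*} [RCLike 𝕜] [SeminormedAddCommGroup V]
    [InnerProductSpace 𝕜 V] [Fintype ι] [Nonempty ι] (p : ℝ)
    (hp1 : -(1 / (Fintype.card ι : ℝ)) ≤ p) (hp2 : p ≤ 1) (z : ι → V)
    (hnorm : ∀ i, ‖z i‖ = 1) (hinner : Pairwise fun i j ↦ inner 𝕜 (z i) (z j) = (p : 𝕜))
    (y : V) (hy : ‖y‖ = 1) (hyz : ∀ i, inner 𝕜 y (z i) = 0) (w : V)
    (hw : w = (√((1 - p) * (1 + p * (Fintype.card ι : ℝ)) /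
          (1 + p * ((Fintype.card ι : ℝ) - 1))) : 𝕜) • y
        + ((p / (1 + p * ((Fintype.card ι : ℝ) - 1)) : ℝ) : 𝕜) • ∑ i, z i) :
    ‖w‖ = 1 ∧ ∀ i, inner 𝕜 w (z i) = (p : 𝕜) := by
  have hcard : (1 : ℝ) ≤ Fintype.card ι := Nat.one_le_cast.2 Fintype.card_pos
  have hySum : inner 𝕜 y (∑ i, z i) = 0 := by simp [inner_sum, hyz]
  have hD := one_add_mul_sub_one_pos_of_neg_one_div_le hcard hp1
  subst hw
  constructor
  · rw [← sq_eq_sq₀ (norm_nonneg _) zero_le_one,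
      norm_smul_add_smul_sq_of_inner_eq_zero hySum, norm_sum_sq_of_equiangular hnorm hinner, hy,
      RCLike.norm_ofReal, RCLike.norm_ofReal, sq_abs, sq_abs, one_pow, mul_one,
      sqrt_sq_add_div_sq_mul_eq_one hcard hp1 hp2]
  · intro i
    rw [inner_add_left, inner_smul_left, inner_smul_left, hyz, mul_zero, zero_add,
      inner_sum_left_of_equiangular hnorm hinner, RCLike.conj_ofReal]
    exact_mod_cast div_mul_cancel₀ p hD.ne'

theorem gram_schmidt_p_step
    {V : Type*} [NormedAddCommGroup V] [InnerProductSpace ℝ V]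
    (k : ℕ) (hk : 1 ≤ k) (p : ℝ) (hp1 : -(1 / (k : ℝ)) < p) (hp2 : p < 1)
    (z : Fin k → V)
    (hnorm : ∀ i : Fin k, ‖z i‖ = 1)
    (hinner : ∀ i j : Fin k, i ≠ j → ⟪z i, z j⟫ = p)
    (y : V) (hy : ‖y‖ = 1) (hyz : ∀ i : Fin k, ⟪y, z i⟫ = 0)
    (w : V)
    (hw : w = Real.sqrt ((1 - p) * (1 + p * (k : ℝ)) / (1 + p * ((k : ℝ) - 1))) • y
        + (p / (1 + p * ((k : ℝ) - 1))) • ∑ i, z i) :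
    ‖w‖ = 1 ∧ ∀ i : Fin k, ⟪w, z i⟫ = p := by
  have : Nonempty (Fin k) := ⟨⟨0, hk⟩⟩
  exact gram_schmidt_p_step_general (𝕜 := ℝ) p (by simpa using hp1.le) hp2.le z hnorm
    (fun i j ↦ hinner i j) y hy hyz w (by simpa using hw)
end

section
/- Let V be a real inner product space, let n ≥ 3, let y_1, …, y_n be an orthonormal set in V, let -1/(n-1) < p < 1, and define vectors z_1, …, z_n recursively by z_1 = y_1 and z_{k+1} = √((1-p)(1+pk)/(1+p(k-1)))·y_{k+1} + (p/(1+p(k-1)))·(z_1 + z_2 + ⋯ + z_k) for 1 ≤ k ≤ n-1. Then each z_k lies in span{y_1, …, y_k}, and the coordinates stabilize: for every 2 ≤ k ≤ n-1 and every 1 ≤ i ≤ k-1 one has ⟪z_{k+1}, y_i⟫ = ⟪z_k, y_i⟫. -/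
open scoped RealInnerProductSpace

/-!
Put `A = 1 + p (k - 2)`, so that the denominators used for `z k` and `z (k + 1)` are `A` and
`A + p`. Writing the sum of `z 1, …, z k` as the sum of `z 1, …, z (k - 1)` plus `z k`, the
shorter sum enters `z (k + 1)` with coefficient `p / (A + p) * (1 + p / A) = p / A`, the same as
in `z k`. Hence `z (k + 1) - z k` is a combination of `y k` and `y (k + 1)` alone, and every
functional vanishing on these two vectors, such as `⟪·, y i⟫` for `i < k`, takes the same value
at `z k` and `z (k + 1)`.
-/

theorem mem_span_image_Icc_of_eq_add_smul_sum {R M : Type*} [Semiring R] [AddCommMonoid M]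
    [Module R M] {n : ℕ} {b c : ℕ → R} {y z : ℕ → M} (hz1 : z 1 = y 1)
    (hrec : ∀ k : ℕ, 1 ≤ k → k ≤ n - 1 →
      z (k + 1) = c k • y (k + 1) + b k • ∑ j ∈ Finset.Icc 1 k, z j)
    {k : ℕ} (hk : 1 ≤ k) (hkn : k ≤ n) :
    z k ∈ Submodule.span R (y '' Set.Icc 1 k) := by
  induction k using Nat.strong_induction_on with
  | _ k ih =>
    obtain rfl | ⟨m, hm, rfl⟩ : k = 1 ∨ ∃ m, 1 ≤ m ∧ k = m + 1 := by
      rcases hk.eq_or_lt with h | h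
      exacts [.inl h.symm, .inr ⟨k - 1, by omega, by omega⟩]
    · rw [hz1]
      exact Submodule.subset_span (Set.mem_image_of_mem y (by simp))
    · have hy : y (m + 1) ∈ Submodule.span R (y '' Set.Icc 1 (m + 1)) :=
        Submodule.subset_span (Set.mem_image_of_mem y (by simp))
      have hsum : ∑ j ∈ Finset.Icc 1 m, z j ∈ Submodule.span R (y '' Set.Icc 1 (m + 1)) := by
        refine Submodule.sum_mem _ fun j hj ↦ ?_
        obtain ⟨hj1, hjm⟩ := Finset.mem_Icc.mp hj
        have hsub : Set.Icc 1 j ⊆ Set.Icc 1 (m + 1) := Set.Icc_subset_Icc_right (by omega)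
        exact Submodule.span_mono (Set.image_mono hsub) (ih j (by omega) hj1 (by omega))
      rw [hrec m hm (by omega)]
      exact add_mem (Submodule.smul_mem _ _ hy) (Submodule.smul_mem _ _ hsum)

section Module

variable {K V : Type*} [Field K] [AddCommGroup V] [Module K V]

theorem sub_eq_sub_smul_of_eq_add_div_smul {A p : K} (hA : A ≠ 0) (hAp : A + p ≠ 0)
    {s u v x x' : V} (hu : u = x + (p / A) • s) (hv : v = x' + (p / (A + p)) • (s + u)) :
    v - u = x' - (A / (A + p)) • x := by
  rw [hv, hu]
  match_scalars <;> field_simp <;> ring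

theorem succ_sub_self_eq_of_eq_add_div_smul_sum {p : K} {c : ℕ → K} {y z : ℕ → V} {k : ℕ}
    (hden : 1 + p * ((k : K) - 1) ≠ 0) (hden_succ : 1 + p * (k : K) ≠ 0)
    (hz : z (k + 1) = c k • y (k + 1)
      + (p / (1 + p * ((k : K) - 1))) • ∑ j ∈ Finset.Icc 1 k, z j)
    (hz_succ : z (k + 2) = c (k + 1) • y (k + 2)
      + (p / (1 + p * (k : K))) • ∑ j ∈ Finset.Icc 1 (k + 1), z j) :
    z (k + 2) - z (k + 1) = c (k + 1) • y (k + 2)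
      - ((1 + p * ((k : K) - 1)) / (1 + p * (k : K))) • c k • y (k + 1) := by
  have hA : 1 + p * (k : K) = 1 + p * ((k : K) - 1) + p := by ring
  rw [hA] at hden_succ hz_succ ⊢
  rw [Finset.sum_Icc_succ_top (by omega)] at hz_succ
  exact sub_eq_sub_smul_of_eq_add_div_smul hden hden_succ hz hz_succ

theorem gram_schmidt_p_coords_stabilize_general (n : ℕ) (p : K)
    (hden : ∀ k : ℕ, 1 ≤ k → k ≤ n - 1 → 1 + p * ((k : K) - 1) ≠ 0)
    (c : ℕ → K) (y : ℕ → V) (φ : ℕ → Module.Dual K V)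
    (hφ : ∀ i j : ℕ, 1 ≤ i → i < j → j ≤ n → φ i (y j) = 0)
    (z : ℕ → V) (hz1 : z 1 = y 1)
    (hrec : ∀ k : ℕ, 1 ≤ k → k ≤ n - 1 →
      z (k + 1) = c k • y (k + 1)
        + (p / (1 + p * ((k : K) - 1))) • ∑ j ∈ Finset.Icc 1 k, z j) :
    (∀ k : ℕ, 1 ≤ k → k ≤ n → z k ∈ Submodule.span K (y '' Set.Icc 1 k)) ∧
    (∀ k : ℕ, 2 ≤ k → k ≤ n - 1 → ∀ i : ℕ, 1 ≤ i → i ≤ k - 1 →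
      φ i (z (k + 1)) = φ i (z k)) := by
  refine ⟨fun k ↦ mem_span_image_Icc_of_eq_add_smul_sum hz1 hrec, fun k hk hkn i hi hik ↦ ?_⟩
  obtain ⟨m, rfl⟩ : ∃ m, k = m + 1 := ⟨k - 1, by omega⟩
  have hcast : ((m + 1 : ℕ) : K) - 1 = m := by push_cast; ring
  have hdiff := succ_sub_self_eq_of_eq_add_div_smul_sum (hden m (by omega) (by omega))
    (hcast ▸ hden (m + 1) (by omega) hkn) (hrec m (by omega) (by omega))
    (hcast ▸ hrec (m + 1) (by omega) hkn)
  rw [← sub_eq_zero, ← map_sub, hdiff]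
  simp [hφ i (m + 1) hi (by omega) (by omega), hφ i (m + 2) hi (by omega) (by omega)]

end Module

theorem one_add_mul_pos_of_neg_one_div_lt {F : Type*} [Field F] [LinearOrder F]
    [IsStrictOrderedRing F] {a p t : F} (hp : -(1 / a) < p) (ht : 0 ≤ t) (hta : t ≤ a) :
    0 < 1 + p * t := by
  rcases ht.eq_or_lt with rfl | ht
  · simp
  · have ha : 0 < a := ht.trans_le hta
    calc 0 ≤ 1 + -(1 / a) * t := by
          have : t / a ≤ 1 := (div_le_one ha).mpr hta
          linear_combination this
      _ < 1 + p * t := by gcongr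

theorem gram_schmidt_p_coords_stabilize
    {V : Type*} [NormedAddCommGroup V] [InnerProductSpace ℝ V]
    (n : ℕ) (hn : 3 ≤ n) (p : ℝ)
    (hp1 : -(1 / ((n : ℝ) - 1)) < p) (hp2 : p < 1)
    (y : ℕ → V)
    (hynorm : ∀ i : ℕ, 1 ≤ i → i ≤ n → ‖y i‖ = 1)
    (hyorth : ∀ i j : ℕ, 1 ≤ i → i ≤ n → 1 ≤ j → j ≤ n → i ≠ j → ⟪y i, y j⟫ = 0)
    (z : ℕ → V) (hz1 : z 1 = y 1)
    (hrec : ∀ k : ℕ, 1 ≤ k → k ≤ n - 1 →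
      z (k + 1)
        = Real.sqrt ((1 - p) * (1 + p * (k : ℝ)) / (1 + p * ((k : ℝ) - 1))) • y (k + 1)
          + (p / (1 + p * ((k : ℝ) - 1))) • ∑ j ∈ Finset.Icc 1 k, z j) :
    (∀ k : ℕ, 1 ≤ k → k ≤ n →
      z k ∈ Submodule.span ℝ (y '' {i : ℕ | 1 ≤ i ∧ i ≤ k})) ∧
    (∀ k : ℕ, 2 ≤ k → k ≤ n - 1 → ∀ i : ℕ, 1 ≤ i → i ≤ k - 1 →
      ⟪z (k + 1), y i⟫ = ⟪z k, y i⟫) := by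
  have hden (k : ℕ) (hk : 1 ≤ k) (hkn : k ≤ n - 1) : 1 + p * ((k : ℝ) - 1) ≠ 0 := by
    have hk' : (1 : ℝ) ≤ k := mod_cast hk
    have hkn' : (k : ℝ) ≤ n := mod_cast hkn.trans (Nat.sub_le n 1)
    exact (one_add_mul_pos_of_neg_one_div_lt hp1 (by linarith) (by linarith)).ne'
  exact gram_schmidt_p_coords_stabilize_general n p hden _ y (fun i ↦ (innerₗ V).flip (y i))
    (fun i j hi hij hj ↦ hyorth j i (by omega) hj hi (by omega) hij.ne') z hz1 hrec
end

section
/- Let V be a real inner product space, let n ≥ 2, let y_1, …, y_n be an orthonormal set in V, let p be a real number with -1/(n-1) < p < 1 and p ≠ 0, and define vectors z_1, …, z_n recursively by z_1 = y_1 and z_{k+1} = √((1-p)(1+pk)/(1+p(k-1)))·y_{k+1} + (p/(1+p(k-1)))·(z_1 + z_2 + ⋯ + z_k) for 1 ≤ k ≤ n-1. Then for every 2 ≤ k ≤ n, z_k = a_1(p)·y_1 + a_2(p)·y_2 + ⋯ + a_{k-1}(p)·y_{k-1} + ((1+p(k-1))/p)·a_k(p)·y_k, where a_m(p) = (p/(1+p(m-1)))·√((1-p)(1+p(m-1))/(1+p(m-2)))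 for m ≥ 1. -/
open scoped RealInnerProductSpace

/-- The coefficients `a_m(p)` from the Gram--Schmidt `p`-algorithm. -/
noncomputable def aCoeff (p : ℝ) (m : ℕ) : ℝ :=
  p / (1 + p * ((m : ℝ) - 1))
    * Real.sqrt ((1 - p) * (1 + p * ((m : ℝ) - 1)) / (1 + p * ((m : ℝ) - 2)))

/-!
Put `S k = z 1 + ⋯ + z k` and `d k = 1 + p (k - 1)`. The recursion says that
`S (k + 1) = c • y (k + 1) + (d (k + 1) / d k) • S k` with `c` the square root, so after division
by `d (k + 1)` the vectors `S k / d k` telescope. This expresses `(p / d k) • S k`, which is the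
part of `z (k + 1)` other than its `y (k + 1)` term, as a combination of `y 1, …, y k`.
-/

theorem inv_smul_sum_Icc_eq_sum_inv_smul {K V : Type*} [DivisionRing K] [AddCommGroup V]
    [Module K V] {d : ℕ → K} {w z : ℕ → V} {n : ℕ} (hd : ∀ k ≤ n, d k ≠ 0)
    (hz : ∀ k < n,
      z (k + 1) = w (k + 1) + ((d (k + 1) - d k) / d k) • ∑ j ∈ Finset.Icc 1 k, z j) :
    (d n)⁻¹ • ∑ j ∈ Finset.Icc 1 n, z j = ∑ i ∈ Finset.Icc 1 n, (d i)⁻¹ • w i := by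
  induction n with
  | zero => simp
  | succ n ih =>
    have hn : d n ≠ 0 := hd n n.le_succ
    have sum_succ : ∑ j ∈ Finset.Icc 1 (n + 1), z j
        = (d (n + 1) / d n) • ∑ j ∈ Finset.Icc 1 n, z j + w (n + 1) := by
      rw [Finset.sum_Icc_succ_top (by lia), hz n n.lt_succ_self, sub_div, div_self hn, sub_smul,
        one_smul]
      abel
    rw [sum_succ, Finset.sum_Icc_succ_top (by lia),
      ← ih (fun k hk ↦ hd k (by lia)) (fun k hk ↦ hz k (by lia)), smul_add, smul_smul,
      div_eq_mul_inv, inv_mul_cancel_left₀ (hd (n + 1) le_rfl)]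

theorem one_add_mul_pos_of_mem_Icc {R : Type*} [Ring R] [LinearOrder R] [IsStrictOrderedRing R]
    {p a b : R} (hp : p < 1) (hpb : -1 < p * b) (ha : a ∈ Set.Icc (-1) b) : 0 < 1 + p * a := by
  suffices -1 < p * a from neg_lt_iff_pos_add'.mp this
  rcases le_total 0 p with h | h
  · calc
      -1 < p * -1 := by simpa using hp
      _ ≤ p * a := mul_le_mul_of_nonneg_left ha.1 h
  · exact hpb.trans_le (mul_le_mul_of_nonpos_left ha.2 h)

theorem aCoeff_one {p : ℝ} (hp : p ≠ 1) : aCoeff p 1 = p := by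
  have h : (1 - p) / (1 + p * (1 - 2)) = 1 := by
    rw [show 1 + p * (1 - 2) = 1 - p by ring, div_self (sub_ne_zero.mpr hp.symm)]
  simp [aCoeff, h]

theorem div_mul_aCoeff {p : ℝ} {m : ℕ} (hp : p ≠ 0) (hm : 1 + p * ((m : ℝ) - 1) ≠ 0) :
    (1 + p * ((m : ℝ) - 1)) / p * aCoeff p m
      = √((1 - p) * (1 + p * ((m : ℝ) - 1)) / (1 + p * ((m : ℝ) - 2))) := by
  rw [aCoeff, ← mul_assoc, div_mul_div_cancel₀ hp, div_self hm, one_mul]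

section

variable {V : Type*} [AddCommGroup V] [Module ℝ V] {n : ℕ} {p : ℝ} {y z : ℕ → V}

theorem div_smul_sum_Icc_eq_sum_aCoeff_smul (hp0 : p ≠ 0)
    (hd : ∀ k ≤ n, 1 + p * ((k : ℝ) - 1) ≠ 0)
    (hz : ∀ k < n, z (k + 1)
      = ((1 + p * (((k + 1 : ℕ) : ℝ) - 1)) / p * aCoeff p (k + 1)) • y (k + 1)
        + (p / (1 + p * ((k : ℝ) - 1))) • ∑ j ∈ Finset.Icc 1 k, z j) :
    (p / (1 + p * ((n : ℝ) - 1))) • ∑ j ∈ Finset.Icc 1 n, z j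
      = ∑ i ∈ Finset.Icc 1 n, aCoeff p i • y i := by
  let d (k : ℕ) : ℝ := 1 + p * ((k : ℝ) - 1)
  have d_succ_sub (k : ℕ) : d (k + 1) - d k = p := by simp only [d]; push_cast; ring
  have telescoped : (d n)⁻¹ • ∑ j ∈ Finset.Icc 1 n, z j
      = ∑ i ∈ Finset.Icc 1 n, (d i)⁻¹ • (d i / p * aCoeff p i) • y i :=
    inv_smul_sum_Icc_eq_sum_inv_smul hd fun k hk ↦ by rw [d_succ_sub]; exact hz k hk
  rw [div_eq_mul_inv, mul_smul, telescoped, Finset.smul_sum]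
  refine Finset.sum_congr rfl fun i hi ↦ ?_
  have hdi : d i ≠ 0 := hd i (Finset.mem_Icc.mp hi).2
  rw [smul_smul, smul_smul]
  congr 1
  field_simp

theorem gram_schmidt_p_explicit_general (hp1 : -1 < p * ((n : ℝ) - 1)) (hp2 : p < 1) (hp0 : p ≠ 0)
    (hz1 : z 1 = y 1)
    (hrec : ∀ k : ℕ, 1 ≤ k → k < n →
      z (k + 1)
        = √((1 - p) * (1 + p * (k : ℝ)) / (1 + p * ((k : ℝ) - 1))) • y (k + 1)
          + (p / (1 + p * ((k : ℝ) - 1))) • ∑ j ∈ Finset.Icc 1 k, z j)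
    {k : ℕ} (hk1 : 1 ≤ k) (hkn : k ≤ n) :
    z k = (∑ i ∈ Finset.Icc 1 (k - 1), aCoeff p i • y i)
      + ((1 + p * ((k : ℝ) - 1)) / p * aCoeff p k) • y k := by
  have hd (k : ℕ) (hk : k ≤ n) : 1 + p * ((k : ℝ) - 1) ≠ 0 :=
    (one_add_mul_pos_of_mem_Icc hp2 hp1 ⟨by simp, by gcongr⟩).ne'
  have hz (k : ℕ) (hk : k < n) : z (k + 1)
      = ((1 + p * (((k + 1 : ℕ) : ℝ) - 1)) / p * aCoeff p (k + 1)) • y (k + 1)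
        + (p / (1 + p * ((k : ℝ) - 1))) • ∑ j ∈ Finset.Icc 1 k, z j := by
    rcases k.eq_zero_or_pos with rfl | hk0
    · simp [aCoeff_one hp2.ne, hp0, hz1]
    · rw [div_mul_aCoeff hp0 (hd (k + 1) hk), hrec k hk0 hk]
      push_cast
      ring_nf
  obtain ⟨m, rfl⟩ := Nat.exists_eq_add_of_le' hk1
  rw [hz m hkn, div_smul_sum_Icc_eq_sum_aCoeff_smul hp0 (fun i hi ↦ hd i (by lia))
    (fun i hi ↦ hz i (by lia)), add_comm, Nat.add_sub_cancel]

end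

theorem gram_schmidt_p_explicit
    {V : Type*} [NormedAddCommGroup V] [InnerProductSpace ℝ V]
    (n : ℕ) (hn : 2 ≤ n) (p : ℝ)
    (hp1 : -(1 / ((n : ℝ) - 1)) < p) (hp2 : p < 1) (hp0 : p ≠ 0)
    (y : ℕ → V)
    (hynorm : ∀ i : ℕ, 1 ≤ i → i ≤ n → ‖y i‖ = 1)
    (hyorth : ∀ i j : ℕ, 1 ≤ i → i ≤ n → 1 ≤ j → j ≤ n → i ≠ j → ⟪y i, y j⟫ = 0)
    (z : ℕ → V) (hz1 : z 1 = y 1)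
    (hrec : ∀ k : ℕ, 1 ≤ k → k ≤ n - 1 →
      z (k + 1)
        = Real.sqrt ((1 - p) * (1 + p * (k : ℝ)) / (1 + p * ((k : ℝ) - 1))) • y (k + 1)
          + (p / (1 + p * ((k : ℝ) - 1))) • ∑ j ∈ Finset.Icc 1 k, z j) :
    ∀ k : ℕ, 2 ≤ k → k ≤ n →
      z k = (∑ i ∈ Finset.Icc 1 (k - 1), aCoeff p i • y i)
        + ((1 + p * ((k : ℝ) - 1)) / p * aCoeff p k) • y k := by
  have hn1 : (0 : ℝ) < n - 1 := sub_pos.mpr (by exact_mod_cast hn)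
  have hpn : -1 < p * ((n : ℝ) - 1) := by rwa [← div_lt_iff₀ hn1, neg_div]
  exact fun k hk2 ↦ gram_schmidt_p_explicit_general hpn hp2 hp0 hz1
    (fun k hk1 hkn ↦ hrec k hk1 (Nat.le_sub_one_of_lt hkn)) (one_le_two.trans hk2)
end

section
/- Let V be a real inner product space, let (y_i)_{i=1}^∞ be an orthonormal sequence in V, let 0 < p < 1, and for each k ≥ 2 define z_k = a_1(p)·y_1 + ⋯ + a_{k-1}(p)·y_{k-1} + ((1+p(k-1))/p)·a_k(p)·y_k, with z_1 = y_1, where a_m(p) = (p/(1+p(m-1)))·√((1-p)(1+p(m-1))/(1+p(m-2))). Then ‖z_k‖ = 1 for all k ≥ 1, ⟪z_k, z_m⟫ = p and ‖z_k - z_m‖ = √(2-2p) for all k ≠ m. -/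
open scoped RealInnerProductSpace

/-!
Write `d m = 1 + p * (m - 1)`. The squares of the coefficients telescope,
`a_m ^ 2 = p * (1 - p) * (1 / d (m - 1) - 1 / d m)`, and `d 0 = 1 - p`, so that
`a_1 ^ 2 + ⋯ + a_(k-1) ^ 2 = p - p * (1 - p) / d (k - 1)`. By orthonormality, `⟪z_k, z_m⟫` for
`k < m` exceeds this sum by the product of the last coordinate of `z_k` with `a_k`, and `‖z_k‖ ^ 2`
exceeds it by the square of that last coordinate; the last coordinate `(d k / p) * a_k` is the one
that makes the totals `p` and `1`.
-/

section InnerProductSpace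

theorem inner_sum_smul_of_orthonormal_coe {𝕜 V ι : Type*} [RCLike 𝕜] [SeminormedAddCommGroup V]
    [InnerProductSpace 𝕜 V] {s : Finset ι} {v : ι → V} (hv : Orthonormal 𝕜 fun i : s ↦ v i)
    (f g : ι → 𝕜) :
    inner 𝕜 (∑ i ∈ s, f i • v i) (∑ i ∈ s, g i • v i) = ∑ i ∈ s, starRingEnd 𝕜 (f i) * g i := by
  simpa only [← Finset.sum_coe_sort s] using
    hv.inner_sum (fun i ↦ f i) (fun i ↦ g i) Finset.univ

theorem norm_sub_eq_sqrt_of_norm_eq_one {V : Type*} [SeminormedAddCommGroup V]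
    [InnerProductSpace ℝ V] {x y : V} (hx : ‖x‖ = 1) (hy : ‖y‖ = 1) :
    ‖x - y‖ = √(2 - 2 * ⟪x, y⟫) := by
  rw [← Real.sqrt_sq (norm_nonneg (x - y)), norm_sub_sq_real, hx, hy]
  ring_nf

end InnerProductSpace

section Coefficients

variable {p : ℝ}

theorem one_add_mul_sub_one_pos_of_le (hp : p < 1) {k N : ℕ} (hN : 0 < 1 + p * ((N : ℝ) - 1))
    (hkN : k ≤ N) : 0 < 1 + p * ((k : ℝ) - 1) := by
  have hkN' : (k : ℝ) ≤ N := by exact_mod_cast hkN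
  rcases le_total 0 p with h | h
  · linarith [mul_nonneg h k.cast_nonneg]
  · linarith [mul_le_mul_of_nonpos_left hkN' h]

theorem one_add_mul_sub_two_pos (hp : p < 1) {k : ℕ} (hk : 1 ≤ k)
    (h_pos : 0 < 1 + p * ((k : ℝ) - 1)) : 0 < 1 + p * ((k : ℝ) - 2) := by
  have h_pred : ((k - 1 : ℕ) : ℝ) - 1 = k - 2 := by push_cast [hk]; ring
  exact h_pred ▸ one_add_mul_sub_one_pos_of_le hp h_pos (k.sub_le 1)

theorem aCoeff_sq (hp : p < 1) {m : ℕ} (hm : 0 < 1 + p * ((m : ℝ) - 1))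
    (hm' : 0 < 1 + p * ((m : ℝ) - 2)) :
    aCoeff p m ^ 2 = p ^ 2 * (1 - p) / ((1 + p * ((m : ℝ) - 1)) * (1 + p * ((m : ℝ) - 2))) := by
  have hp' : 0 < 1 - p := sub_pos.2 hp
  rw [aCoeff, mul_pow, Real.sq_sqrt (by positivity)]
  field_simp

theorem sum_aCoeff_sq (hp : p < 1) {n : ℕ} (hn : 0 < 1 + p * ((n : ℝ) - 1)) :
    ∑ i ∈ Finset.Icc 1 n, aCoeff p i ^ 2 = p - p * (1 - p) / (1 + p * ((n : ℝ) - 1)) := by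
  induction n with
  | zero =>
    have hp' : 1 - p ≠ 0 := (sub_pos.2 hp).ne'
    simp [← sub_eq_add_neg, hp']
  | succ n ih =>
    have hn' := one_add_mul_sub_one_pos_of_le hp hn n.le_succ
    have h_pred : ((n + 1 : ℕ) : ℝ) - 2 = n - 1 := by push_cast; ring
    rw [Finset.sum_Icc_succ_top (by omega), ih hn', aCoeff_sq hp hn (h_pred ▸ hn'), h_pred]
    push_cast at hn ⊢
    rw [add_sub_cancel_right] at hn ⊢
    field_simp
    ring

/-- The coordinate at `y_i` of the `k`-th vector `z_k` of the Gram--Schmidt `p`-algorithm; it is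
meaningful for `i, k ≥ 1`. -/
noncomputable def pCoord (p : ℝ) (k i : ℕ) : ℝ :=
  if i < k then aCoeff p i
  else if i = k then (1 + p * ((k : ℝ) - 1)) / p * aCoeff p k
  else 0

theorem pCoord_of_lt {k i : ℕ} (h : i < k) : pCoord p k i = aCoeff p i := if_pos h

theorem pCoord_self (k : ℕ) : pCoord p k k = (1 + p * ((k : ℝ) - 1)) / p * aCoeff p k := by
  simp [pCoord]

theorem pCoord_of_gt {k i : ℕ} (h : k < i) : pCoord p k i = 0 := by
  simp [pCoord, h.not_gt, h.ne']

theorem pCoord_one_one (hp0 : p ≠ 0) (hp : p < 1) : pCoord p 1 1 = 1 := by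
  have hp' : 1 - p ≠ 0 := (sub_pos.2 hp).ne'
  have h_den : 1 + p * (1 - 2) = 1 - p := by ring
  simp [pCoord, aCoeff, h_den, hp', hp0]

theorem sum_pCoord_smul {M : Type*} [AddCommGroup M] [Module ℝ M] {k N : ℕ} (hk : 1 ≤ k)
    (hkN : k ≤ N) (f : ℕ → M) :
    ∑ i ∈ Finset.Icc 1 N, pCoord p k i • f i =
      ∑ i ∈ Finset.Icc 1 (k - 1), aCoeff p i • f i + pCoord p k k • f k := by
  obtain ⟨n, rfl⟩ := Nat.exists_eq_add_of_le' hk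
  have h_tail : ∑ i ∈ Finset.Icc 1 N, pCoord p (n + 1) i • f i =
      ∑ i ∈ Finset.Icc 1 (n + 1), pCoord p (n + 1) i • f i := by
    refine (Finset.sum_subset (Finset.Icc_subset_Icc_right hkN) fun i hi hi' ↦ ?_).symm
    rw [pCoord_of_gt (by grind), zero_smul]
  rw [h_tail, Finset.sum_Icc_succ_top hk, Nat.add_sub_cancel]
  congr 1
  refine Finset.sum_congr rfl fun i hi ↦ ?_
  rw [pCoord_of_lt (Nat.lt_succ_of_le (Finset.mem_Icc.1 hi).2)]

theorem sum_pCoord_mul (hp : p < 1) {k m N : ℕ} (hk : 1 ≤ k) (hkm : k ≤ m) (hkN : k ≤ N)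
    (h_pos : 0 < 1 + p * ((k : ℝ) - 1)) :
    ∑ i ∈ Finset.Icc 1 N, pCoord p k i * pCoord p m i =
      p - p * (1 - p) / (1 + p * ((k : ℝ) - 2)) + pCoord p k k * pCoord p m k := by
  have h_pred : ((k - 1 : ℕ) : ℝ) - 1 = k - 2 := by push_cast [hk]; ring
  have h_pos' := one_add_mul_sub_one_pos_of_le hp h_pos (k.sub_le 1)
  rw [← h_pred, ← sum_aCoeff_sq hp h_pos']
  simp only [← smul_eq_mul, sum_pCoord_smul hk hkN]
  congr 1
  refine Finset.sum_congr rfl fun i hi ↦ ?_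
  rw [pCoord_of_lt (by grind), smul_eq_mul, sq]

theorem sum_pCoord_mul_of_lt (hp0 : p ≠ 0) (hp : p < 1) {k m N : ℕ} (hk : 1 ≤ k) (hkm : k < m)
    (hkN : k ≤ N) (h_pos : 0 < 1 + p * ((k : ℝ) - 1)) :
    ∑ i ∈ Finset.Icc 1 N, pCoord p k i * pCoord p m i = p := by
  have h_pos' := one_add_mul_sub_two_pos hp hk h_pos
  have h_last : pCoord p k k * pCoord p m k = p * (1 - p) / (1 + p * ((k : ℝ) - 2)) := by
    rw [pCoord_self, pCoord_of_lt hkm, mul_assoc, ← sq, aCoeff_sq hp h_pos h_pos']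
    field_simp
  rw [sum_pCoord_mul hp hk hkm.le hkN h_pos, h_last, sub_add_cancel]

theorem sum_pCoord_mul_self (hp0 : p ≠ 0) (hp : p < 1) {k N : ℕ} (hk : 1 ≤ k)
    (hkN : k ≤ N) (h_pos : 0 < 1 + p * ((k : ℝ) - 1)) :
    ∑ i ∈ Finset.Icc 1 N, pCoord p k i * pCoord p k i = 1 := by
  have h_pos' := one_add_mul_sub_two_pos hp hk h_pos
  have h_last : pCoord p k k * pCoord p k k =
      (1 - p) * (1 + p * ((k : ℝ) - 1)) / (1 + p * ((k : ℝ) - 2)) := by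
    rw [pCoord_self, ← sq, mul_pow, aCoeff_sq hp h_pos h_pos']
    field_simp
  rw [sum_pCoord_mul hp hk le_rfl hkN h_pos, h_last]
  field_simp
  ring

theorem sum_pCoord_mul_of_ne (hp0 : p ≠ 0) (hp : p < 1) {k m N : ℕ}
    (hN : 0 < 1 + p * ((N : ℝ) - 1)) (hk : k ∈ Finset.Icc 1 N) (hm : m ∈ Finset.Icc 1 N)
    (hkm : k ≠ m) : ∑ i ∈ Finset.Icc 1 N, pCoord p k i * pCoord p m i = p := by
  wlog h_lt : k < m generalizing k m
  · simpa only [mul_comm] using this hm hk hkm.symm (hkm.lt_or_gt.resolve_left h_lt)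
  obtain ⟨hk1, hkN⟩ := Finset.mem_Icc.1 hk
  exact sum_pCoord_mul_of_lt hp0 hp hk1 h_lt hkN (one_add_mul_sub_one_pos_of_le hp hN hkN)

end Coefficients

theorem gram_schmidt_p_sequence_properties_general
    {V : Type*} [SeminormedAddCommGroup V] [InnerProductSpace ℝ V]
    {p : ℝ} (hp0 : p ≠ 0) (hp : p < 1) {N : ℕ} (hN : 0 < 1 + p * ((N : ℝ) - 1))
    {y : ℕ → V} (hy : Orthonormal ℝ fun i : Finset.Icc 1 N ↦ y i)
    {z : ℕ → V} (hz1 : z 1 = y 1)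
    (hzk : ∀ k : ℕ, 2 ≤ k → k ≤ N →
      z k = (∑ i ∈ Finset.Icc 1 (k - 1), aCoeff p i • y i)
        + ((1 + p * ((k : ℝ) - 1)) / p * aCoeff p k) • y k) :
    (∀ k ∈ Finset.Icc 1 N, ‖z k‖ = 1) ∧
    (∀ k ∈ Finset.Icc 1 N, ∀ m ∈ Finset.Icc 1 N, k ≠ m →
      ⟪z k, z m⟫ = p ∧ ‖z k - z m‖ = √(2 - 2 * p)) := by
  have hz : ∀ k ∈ Finset.Icc 1 N, z k = ∑ i ∈ Finset.Icc 1 N, pCoord p k i • y i := by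
    intro k hk
    obtain ⟨hk1, hkN⟩ := Finset.mem_Icc.1 hk
    rw [sum_pCoord_smul hk1 hkN]
    rcases hk1.eq_or_lt with rfl | hk2
    · simp [hz1, pCoord_one_one hp0 hp]
    · rw [hzk k hk2 hkN, pCoord_self]
  have h_inner : ∀ k ∈ Finset.Icc 1 N, ∀ m ∈ Finset.Icc 1 N,
      ⟪z k, z m⟫ = ∑ i ∈ Finset.Icc 1 N, pCoord p k i * pCoord p m i := by
    intro k hk m hm
    rw [hz k hk, hz m hm, inner_sum_smul_of_orthonormal_coe hy]
    rfl
  have h_norm : ∀ k ∈ Finset.Icc 1 N, ‖z k‖ = 1 := by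
    intro k hk
    obtain ⟨hk1, hkN⟩ := Finset.mem_Icc.1 hk
    have h_pos := one_add_mul_sub_one_pos_of_le hp hN hkN
    rw [norm_eq_sqrt_real_inner, h_inner k hk k hk, sum_pCoord_mul_self hp0 hp hk1 hkN h_pos,
      Real.sqrt_one]
  refine ⟨h_norm, fun k hk m hm hkm ↦ ?_⟩
  have h_ne : ⟪z k, z m⟫ = p := by
    rw [h_inner k hk m hm, sum_pCoord_mul_of_ne hp0 hp hN hk hm hkm]
  exact ⟨h_ne, h_ne ▸ norm_sub_eq_sqrt_of_norm_eq_one (h_norm k hk) (h_norm m hm)⟩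

theorem gram_schmidt_p_sequence_properties
    {V : Type*} [NormedAddCommGroup V] [InnerProductSpace ℝ V]
    (p : ℝ) (hp1 : 0 < p) (hp2 : p < 1)
    (y : ℕ → V)
    (hynorm : ∀ i : ℕ, 1 ≤ i → ‖y i‖ = 1)
    (hyorth : ∀ i j : ℕ, 1 ≤ i → 1 ≤ j → i ≠ j → ⟪y i, y j⟫ = 0)
    (z : ℕ → V) (hz1 : z 1 = y 1)
    (hzk : ∀ k : ℕ, 2 ≤ k →
      z k = (∑ i ∈ Finset.Icc 1 (k - 1), aCoeff p i • y i)
        + ((1 + p * ((k : ℝ) - 1)) / p * aCoeff p k) • y k) :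
    (∀ k : ℕ, 1 ≤ k → ‖z k‖ = 1) ∧
    (∀ k m : ℕ, 1 ≤ k → 1 ≤ m → k ≠ m →
      ⟪z k, z m⟫ = p ∧ ‖z k - z m‖ = Real.sqrt (2 - 2 * p)) := by
  have hy (N : ℕ) : Orthonormal ℝ fun i : Finset.Icc 1 N ↦ y i := by
    refine ⟨fun i ↦ hynorm i (Finset.mem_Icc.1 i.2).1, fun i j hij ↦ ?_⟩
    exact hyorth i j (Finset.mem_Icc.1 i.2).1 (Finset.mem_Icc.1 j.2).1 (Subtype.coe_ne_coe.2 hij)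
  have h_main (N : ℕ) := gram_schmidt_p_sequence_properties_general hp1.ne' hp2
    (by linarith [mul_nonneg hp1.le N.cast_nonneg]) (hy N) hz1 fun k hk _ ↦ hzk k hk
  refine ⟨fun k hk ↦ (h_main k).1 k (by grind), fun k m hk hm ↦ ?_⟩
  exact (h_main (max k m)).2 k (by grind) m (by grind)
end
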